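/- In the ring of formal power series in two variables x, y over the rationals, the identity (1 - x - y - xy) · ∑_{p,q ≥ 0} D(p,q) x^p y^q = 1 holds; equivalently, ∑_{p,q ≥ 0} D(p,q) x^p y^q is the multiplicative inverse of 1 - x - y - xy. -/

import Mathlib

/-- The Delannoy numbers: `D(p,q) = ∑_{i=0}^{p} C(p,i) C(q,i) 2^i`. -/
def delannoy (p q : ℕ) : ℕ :=
  ∑ i ∈ Finset.range (p + 1), p.choose i * q.choose i * 2 ^ i

/-- The formal power series `∑_{p,q ≥ 0} D(p,q) x^p y^q` in two variables over `ℚ`,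
given by its coefficient function. -/
def delannoySeries : MvPowerSeries (Fin 2) ℚ :=
  fun e => (delannoy (e 0) (e 1) : ℚ)

theorem delannoy_aux (p q n : ℕ) :
    ∑ i ∈ Finset.range (n + 1), (p + 1).choose i * (q + 1).choose i * 2 ^ i
      + 2 * (p.choose n * q.choose n * 2 ^ n) =
    ∑ i ∈ Finset.range (n + 1), p.choose i * (q + 1).choose i * 2 ^ i
    + ∑ i ∈ Finset.range (n + 1), (p + 1).choose i * q.choose i * 2 ^ i
    + ∑ i ∈ Finset.range (n + 1), p.choose i * q.choose i * 2 ^ i := by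
  induction n with
  | zero => simp
  | succ n ih =>
    rw [Finset.sum_range_succ _ (n + 1), Finset.sum_range_succ _ (n + 1),
      Finset.sum_range_succ _ (n + 1), Finset.sum_range_succ _ (n + 1)]
    simp only [Nat.choose_succ_succ p n, Nat.choose_succ_succ q n, Nat.succ_eq_add_one]
    rw [pow_succ]
    linarith

theorem delannoy_rec (p q : ℕ) :
    delannoy (p + 1) (q + 1) = delannoy p (q + 1) + delannoy (p + 1) q + delannoy p q := by
  have h := delannoy_aux p q (p + 1)
  rw [Finset.sum_range_succ (fun i => p.choose i * (q + 1).choose i * 2 ^ i),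
    Finset.sum_range_succ (fun i => p.choose i * q.choose i * 2 ^ i)] at h
  simpa [delannoy] using h

theorem delannoy_zero_left (q : ℕ) : delannoy 0 q = 1 := by simp [delannoy]

theorem delannoy_zero_right (p : ℕ) : delannoy p 0 = 1 := by
  simp [delannoy, Finset.sum_range_succ']

theorem coeff_X_mul_aux (s : Fin 2) (φ : MvPowerSeries (Fin 2) ℚ) (e : Fin 2 →₀ ℕ) :
    MvPowerSeries.coeff e (MvPowerSeries.X s * φ) =
      if 1 ≤ e s then MvPowerSeries.coeff (e - Finsupp.single s 1) φ else 0 := by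
  classical
  rw [MvPowerSeries.X_def, MvPowerSeries.coeff_monomial_mul]
  simp [Finsupp.single_le_iff]

/-- The generating-function identity
`(1 - x - y - xy) · ∑_{p,q ≥ 0} D(p,q) x^p y^q = 1` in `ℚ[[x, y]]`. -/
theorem delannoy_generating_function :
    (1 - MvPowerSeries.X 0 - MvPowerSeries.X 1
        - MvPowerSeries.X 0 * MvPowerSeries.X 1 : MvPowerSeries (Fin 2) ℚ) *
      delannoySeries = 1 := by
  classical
  have hc : ∀ e, MvPowerSeries.coeff e delannoySeries = (delannoy (e 0) (e 1) : ℚ) :=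
    fun e => rfl
  ext e
  rw [sub_mul, sub_mul, sub_mul, one_mul, mul_assoc, MvPowerSeries.coeff_one]
  simp only [map_sub, coeff_X_mul_aux, hc]
  have he : e = 0 ↔ e 0 = 0 ∧ e 1 = 0 := by
    rw [Finsupp.ext_iff, Fin.forall_fin_two]; rfl
  simp only [he, Finsupp.tsub_apply, Finsupp.single_apply]
  generalize e 0 = p
  generalize e 1 = q
  rcases p with _ | p <;> rcases q with _ | q <;>
    simp [delannoy_zero_left, delannoy_zero_right, delannoy_rec]
  ring
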